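/- arXiv:2412.20729 — 2 statements merged into one kernel-verified Lean document; each statement's English description precedes it below -/
import Mathlib

section
/- Let G be a connected chordal graph with a minimal rooted tree representation T. Let X be a subtree of T rooted at x, let z ∈ V(X), and let Q be the x–z path in X. Let 𝒫 be a family of longest paths of G such that X has the core capture property for 𝒫 and such that each endpoint of each P ∈ 𝒫 has a subtree containing a vertex outside X. Then there is a set A ⊆ V(G) with |A| ≤ 4 such that the family 𝒫′ of paths in 𝒫 that are disjoint from A is either empty, or there is a component X′ of X − V(Q) such that X′ has the core capture property for 𝒫′. -/
open SimpleGraph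

/-- A graph is chordal if every cycle on at least 4 vertices has a chord
(an edge of the graph joining two vertices of the cycle that is not an edge of the cycle). -/
def IsChordal {V : Type} (G : SimpleGraph V) : Prop :=
  ∀ (v : V) (c : G.Walk v v), c.IsCycle → 4 ≤ c.length →
    ∃ a b : V, a ∈ c.support ∧ b ∈ c.support ∧ G.Adj a b ∧ s(a, b) ∉ c.edges

/-- A tree representation of `G` with host tree `T`: each vertex `u` of `G` gets a
nonempty subtree `S u` of `T`, and distinct vertices are adjacent iff their subtrees meet. -/
structure TreeRep {V W : Type} (G : SimpleGraph V) (T : SimpleGraph W) : Type where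
  isTree : T.IsTree
  S : V → Set W
  subtree_connected : ∀ u : V, (T.induce (S u)).Connected
  adj_iff : ∀ u v : V, u ≠ v → (G.Adj u v ↔ (S u ∩ S v).Nonempty)

/-- A tree representation is minimal if no tree representation of `G` has a host tree
with fewer vertices. -/
def TreeRep.IsMinimal {V W : Type} [Fintype W] {G : SimpleGraph V} {T : SimpleGraph W}
    (_R : TreeRep G T) : Prop :=
  ∀ (W' : Type) [Fintype W'] (T' : SimpleGraph W'),
    Nonempty (TreeRep G T') → Fintype.card W ≤ Fintype.card W'

/-- The bag of a host tree vertex `x`. -/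
def TreeRep.bag {V W : Type} {G : SimpleGraph V} {T : SimpleGraph W}
    (R : TreeRep G T) (x : W) : Set V :=
  {u : V | x ∈ R.S u}

/-- In `T` rooted at `r`, the (vertex set of the) subtree rooted at `x`: all vertices `w`
such that the `r`–`w` path contains `x`. -/
def rootedSubtree {W : Type} (T : SimpleGraph W) (r x : W) : Set W :=
  {w : W | ∀ p : T.Walk r w, p.IsPath → x ∈ p.support}

/-- The core of a subgraph `H` of `G`: the union over edges `uv` of `H` of `V(S u ∩ S v)`,
a set of host-tree vertices. -/
def TreeRep.core {V W : Type} {G : SimpleGraph V} {T : SimpleGraph W}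
    (R : TreeRep G T) (H : G.Subgraph) : Set W :=
  {t : W | ∃ u v : V, H.Adj u v ∧ t ∈ R.S u ∧ t ∈ R.S v}

/-- `C` is a connected component of the subgraph of `T` induced on the vertex set `s`. -/
def IsCompOf {W : Type} (T : SimpleGraph W) (s C : Set W) : Prop :=
  C.Nonempty ∧ C ⊆ s ∧ (T.induce C).Connected ∧
    ∀ ⦃a b : W⦄, a ∈ C → b ∈ s → T.Adj a b → b ∈ C

/-- A graph is 2-connected if it has more than 2 vertices and deleting any one vertex
leaves it connected. -/
def TwoConnected {V : Type} (G : SimpleGraph V) : Prop :=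
  2 < Nat.card V ∧ ∀ v : V, (G.induce {v}ᶜ).Connected

/-- `G` is `k`-connected: more than `k` vertices, and deleting fewer than `k` vertices
leaves it connected. -/
def IsKConnectedGraph {V : Type} (G : SimpleGraph V) (k : ℕ) : Prop :=
  k < Nat.card V ∧ ∀ s : Set V, s.Finite → s.ncard < k → (G.induce sᶜ).Connected

/-- The vertex connectivity `κ(G)`: the maximum `k` such that `G` is `k`-connected. -/
noncomputable def vertexConnectivity {V : Type} (G : SimpleGraph V) : ℕ :=
  sSup {k : ℕ | IsKConnectedGraph G k}

/-- `p` is a path of maximum length in `G`. -/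
def IsLongestPath {V : Type} (G : SimpleGraph V) {a b : V} (p : G.Walk a b) : Prop :=
  p.IsPath ∧ ∀ (c d : V) (q : G.Walk c d), q.IsPath → q.length ≤ p.length

/-- `c` is a cycle of maximum length in `G`. -/
def IsLongestCycle {V : Type} (G : SimpleGraph V) {a : V} (c : G.Walk a a) : Prop :=
  c.IsCycle ∧ ∀ (d : V) (q : G.Walk d d), q.IsCycle → q.length ≤ c.length

/-- The longest path transversal number of `G`: the least size of a set of vertices
meeting every longest path. -/
noncomputable def lpt {V : Type} (G : SimpleGraph V) : ℕ :=
  sInf {k : ℕ | ∃ A : Set V, A.Finite ∧ A.ncard = k ∧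
    ∀ (a b : V) (p : G.Walk a b), IsLongestPath G p → ∃ v ∈ A, v ∈ p.support}

/-- The longest cycle transversal number of `G`: the least size of a set of vertices
meeting every longest cycle. -/
noncomputable def lct {V : Type} (G : SimpleGraph V) : ℕ :=
  sInf {k : ℕ | ∃ A : Set V, A.Finite ∧ A.ncard = k ∧
    ∀ (a : V) (c : G.Walk a a), IsLongestCycle G c → ∃ v ∈ A, v ∈ c.support}

/-- `DQX T q X Q0`: the union, over `y ∈ Q0`, of the component of `X − E(Q)` containing
`y` (all vertices joined to some `y ∈ Q0` by a walk inside `X` avoiding the edges of `q`). -/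
def DQX {W : Type} (T : SimpleGraph W) {x z : W} (q : T.Walk x z) (X : Set W)
    (Q0 : Set W) : Set W :=
  {w : W | ∃ y ∈ Q0, ∃ d : (T.deleteEdges {e : Sym2 W | e ∈ q.edges}).Walk y w,
    ∀ a ∈ d.support, a ∈ X}

/-- Cutter can force the Cutter–Chooser game from position `(X, x)` (a subtree `X` of the
host tree, rooted at `x`) to end within `t` rounds: Cutter picks `z ∈ X` and cuts along the
`x`–`z` path `Q` in `X`; either `X = Q` (game over), or for every component `X'` of
`X − V(Q)` (with its root `x'`, the vertex of `X'` adjacent to `Q`) that Chooser may pick,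
Cutter wins within `t - 1` further rounds. -/
def cutterWins {W : Type} (T : SimpleGraph W) : ℕ → Set W → W → Prop
  | 0, _, _ => False
  | t + 1, X, x =>
      ∃ z ∈ X, ∃ p : T.Walk x z, p.IsPath ∧ (∀ w ∈ p.support, w ∈ X) ∧
        (X = {w : W | w ∈ p.support} ∨
          ∀ (X' : Set W) (x' : W), IsCompOf T (X \ {w : W | w ∈ p.support}) X' →
            x' ∈ X' → (∃ u ∈ p.support, T.Adj u x') → cutterWins T t X' x')

/-- `ccg(X, x)`: the number of rounds of the Cutter–Chooser game on the subtree `X` of the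
host tree rooted at `x`, under optimal play. -/
noncomputable def ccgOn {W : Type} (T : SimpleGraph W) (X : Set W) (x : W) : ℕ :=
  sInf {t : ℕ | cutterWins T t X x}

/-- `ccg(T)`: the minimum over roots `r` of `ccg(T, r)`. -/
noncomputable def ccg {W : Type} (T : SimpleGraph W) : ℕ :=
  sInf (Set.range fun r : W => ccgOn T Set.univ r)

/-- A subdivided caterpillar: a tree having a (spine) path containing every vertex of
degree at least 3. -/
def IsSubdividedCaterpillar {W : Type} (T : SimpleGraph W) : Prop :=
  T.IsTree ∧ ∃ (a b : W) (q : T.Walk a b), q.IsPath ∧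
    ∀ v : W, 3 ≤ (T.neighborSet v).ncard → v ∈ q.support

/-- A subdivided star: a tree with at most one vertex of degree at least 3. -/
def IsSubdividedStar {W : Type} (T : SimpleGraph W) : Prop :=
  T.IsTree ∧ ∀ v w : W, 3 ≤ (T.neighborSet v).ncard → 3 ≤ (T.neighborSet w).ncard → v = w

/-- A leaf: a vertex of degree 1. -/
def IsLeaf {W : Type} (T : SimpleGraph W) (v : W) : Prop := (T.neighborSet v).ncard = 1

/-- `mf T`: the maximum over edges `e` of `T` of the minimum number of leaves of `T`
contained in a component of `T − e`. -/
noncomputable def mf {W : Type} (T : SimpleGraph W) : ℕ :=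
  sSup {k : ℕ | ∃ u v : W, T.Adj u v ∧
    k = min {w : W | IsLeaf T w ∧ (T.deleteEdges {s(u, v)}).Reachable u w}.ncard
            {w : W | IsLeaf T w ∧ (T.deleteEdges {s(u, v)}).Reachable v w}.ncard}

/-- In `T` rooted at `r`, `v` is a child of `u`. -/
def IsChildIn {W : Type} (T : SimpleGraph W) (r u v : W) : Prop :=
  T.Adj u v ∧ ∀ p : T.Walk r v, p.IsPath → u ∈ p.support

/-- In `T` rooted at `r`, `u` is childless. -/
def IsChildlessIn {W : Type} (T : SimpleGraph W) (r u : W) : Prop :=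
  ¬ ∃ v : W, IsChildIn T r u v

/-- In a connected induced subgraph, two vertices are joined by a path inside it. -/
theorem rp_conn_path {W : Type} {T : SimpleGraph W} {S : Set W} (hS : (T.induce S).Connected)
    {s t : W} (hs : s ∈ S) (ht : t ∈ S) :
    ∃ p : T.Walk s t, p.IsPath ∧ ∀ a ∈ p.support, a ∈ S := by
  classical
  obtain ⟨p0⟩ := hS.preconnected ⟨s, hs⟩ ⟨t, ht⟩
  let f : T.induce S →g T := (SimpleGraph.Embedding.induce S).toHom
  let p1 : T.Walk s t := p0.map f
  have h1 : ∀ a ∈ p1.support, a ∈ S := by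
    intro a ha
    have ha' : a ∈ (p0.map f).support := ha
    rw [SimpleGraph.Walk.support_map, List.mem_map] at ha'
    obtain ⟨c, _, rfl⟩ := ha'
    exact c.2
  exact ⟨p1.bypass, p1.bypass_isPath, fun a ha => h1 a (p1.support_bypass_subset_support ha)⟩

/-- Subtrees of a tree are convex. -/
theorem rp_convex {W : Type} {T : SimpleGraph W} (hT : T.IsTree) {S : Set W}
    (hS : (T.induce S).Connected) {s t : W} (hs : s ∈ S) (ht : t ∈ S) (p : T.Walk s t)
    (hp : p.IsPath) : ∀ a ∈ p.support, a ∈ S := by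
  obtain ⟨p', hp', h⟩ := rp_conn_path hS hs ht
  have := (hT.isAcyclic.subsingleton_path s t).elim ⟨p, hp⟩ ⟨p', hp'⟩
  have e : p = p' := congrArg Subtype.val this
  rw [e]; exact h

/-- A connected set meeting a rooted subtree and its complement contains the root. -/
theorem rp_root_mem {W : Type} {T : SimpleGraph W} {S : Set W}
    (hS : (T.induce S).Connected) {r x s t : W} (hs : s ∈ S) (ht : t ∈ S)
    (hsX : s ∈ rootedSubtree T r x) (htX : t ∉ rootedSubtree T r x) : x ∈ S := by
  classical
  by_contra hx
  simp only [rootedSubtree, Set.mem_ofPred_eq, not_forall] at htX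
  obtain ⟨p, _, hp⟩ := htX
  obtain ⟨p', _, h⟩ := rp_conn_path hS ht hs
  have h1 := hsX (p.append p').bypass (p.append p').bypass_isPath
  have h2 := (p.append p').support_bypass_subset_support h1
  rw [SimpleGraph.Walk.mem_support_append_iff] at h2
  rcases h2 with h2 | h2
  · exact hp h2
  · exact hx (h x h2)

/-- A connected set leaving `C` contains an edge leaving `C`. -/
theorem rp_boundary {W : Type} {T : SimpleGraph W} {S C : Set W}
    (hS : (T.induce S).Connected) {s t : W} (hs : s ∈ S) (ht : t ∈ S)
    (hsC : s ∈ C) (htC : t ∉ C) : ∃ c d, c ∈ S ∧ d ∈ S ∧ c ∈ C ∧ d ∉ C ∧ T.Adj c d := by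
  obtain ⟨p, _, h⟩ := rp_conn_path hS hs ht
  obtain ⟨d, hd, h1, h2⟩ := p.exists_boundary_dart C hsC htC
  exact ⟨d.fst, d.snd, h _ (p.dart_fst_mem_support_of_mem_darts hd),
    h _ (p.dart_snd_mem_support_of_mem_darts hd), h1, h2, d.adj⟩

/-- Every vertex of `s` lies in a component of `s`. -/
theorem rp_comp_exists {W : Type} (T : SimpleGraph W) {s : Set W} {t : W} (ht : t ∈ s) :
    ∃ C, IsCompOf T s C ∧ t ∈ C := by
  refine ⟨{w | ∃ p : T.Walk t w, ∀ a ∈ p.support, a ∈ s}, ⟨?_, ?_, ?_, ?_⟩, ?_⟩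
  · exact ⟨t, .nil, by simpa using ht⟩
  · rintro w ⟨p, hp⟩
    exact hp w p.end_mem_support
  · apply T.induce_connected_of_patches t
    · exact ⟨.nil, by simpa using ht⟩
    · rintro w ⟨p, hp⟩
      classical
      refine ⟨{v | v ∈ p.support}, ?_, p.start_mem_support, p.end_mem_support,
        p.connected_induce_support.preconnected _ _⟩
      intro v hv
      exact ⟨p.takeUntil v hv, fun a ha => hp a (p.support_takeUntil_subset_support hv ha)⟩
  · rintro c d ⟨p, hp⟩ hd hcd
    refine ⟨p.concat hcd, fun a ha => ?_⟩
    rw [SimpleGraph.Walk.support_concat] at ha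
    simp only [List.mem_append, List.mem_singleton] at ha
    rcases ha with ha | rfl
    · exact hp a ha
    · exact hd
  · exact ⟨.nil, by simpa using ht⟩

/-- A subtree containing `x` and a vertex of a component `C` off `Q` contains
the attachment vertex of `C` on `Q`. -/
theorem rp_attach {W : Type} {T : SimpleGraph W} (hT : T.IsTree) {S C s : Set W}
    (hS : (T.induce S).Connected) {x z t c d : W} (q : T.Walk x z) (hq : q.IsPath)
    (hC : IsCompOf T (s \ {w : W | w ∈ q.support}) C)
    (hx : x ∈ S) (ht : t ∈ S) (htC : t ∈ C) (hc : c ∈ C) (hd : d ∈ q.support)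
    (hcd : T.Adj c d) : d ∈ S := by
  classical
  obtain ⟨p, hp, hpC⟩ := rp_conn_path hC.2.2.1 hc htC
  have hdis : ∀ a ∈ p.support, a ∉ q.support := fun a ha => (hC.2.1 (hpC a ha)).2
  have hpath : ((q.takeUntil d hd).append (SimpleGraph.Walk.cons hcd.symm p)).IsPath := by
    rw [SimpleGraph.Walk.isPath_def, SimpleGraph.Walk.support_append,
      SimpleGraph.Walk.support_cons, List.tail_cons, List.nodup_append]
    refine ⟨(hq.takeUntil hd).support_nodup, hp.support_nodup, ?_⟩
    rintro a ha b hb rfl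
    exact hdis a hb (q.support_takeUntil_subset_support hd ha)
  refine rp_convex hT hS hx ht _ hpath d ?_
  rw [SimpleGraph.Walk.mem_support_append_iff]
  exact Or.inl (SimpleGraph.Walk.end_mem_support _)

/-- A path, as a list, of maximum length. -/
def rpMaxList {V : Type} (G : SimpleGraph V) (l : List V) : Prop :=
  l.Nodup ∧ l.IsChain G.Adj ∧ ∀ l' : List V, l'.Nodup → l'.IsChain G.Adj → l'.length ≤ l.length

theorem rp_max_of_longest {V : Type} {G : SimpleGraph V} {a b : V} {p : G.Walk a b}
    (hp : IsLongestPath G p) : rpMaxList G p.support := by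
  refine ⟨hp.1.support_nodup, p.isChain_adj_support, fun l' hn hc => ?_⟩
  by_cases hne : l' = []
  · simp [hne]
  · have := hp.2 _ _ (SimpleGraph.Walk.ofSupport l' hne hc) (by
      rw [SimpleGraph.Walk.isPath_def, SimpleGraph.Walk.support_ofSupport]; exact hn)
    rw [SimpleGraph.Walk.length_ofSupport] at this
    rw [SimpleGraph.Walk.length_support]
    omega

theorem rpMaxList.rev {V : Type} {G : SimpleGraph V} {l : List V} (h : rpMaxList G l) :
    rpMaxList G l.reverse := by
  refine ⟨List.nodup_reverse.2 h.1, ?_, by simpa using h.2.2⟩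
  rw [List.isChain_reverse]
  exact h.2.1.imp fun _ _ hab => hab.symm

theorem rpMaxList.no_insert {V : Type} {G : SimpleGraph V} {α β : List V} {u v w : V}
    (h : rpMaxList G (α ++ u :: v :: β)) (hw : w ∉ α ++ u :: v :: β)
    (hu : G.Adj u w) (hv : G.Adj w v) : False := by
  have := h.2.2 (α ++ u :: w :: v :: β) (by have := h.1; grind) (by
    have := h.2.1
    simp only [List.isChain_append, List.isChain_cons_cons, List.head?_cons] at this ⊢
    grind)
  simp at this

theorem rpMaxList.no_end {V : Type} {G : SimpleGraph V} {β : List V} {u w : V}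
    (h : rpMaxList G (u :: β)) (hw : w ∉ u :: β) (hu : G.Adj w u) : False := by
  have := h.2.2 (w :: u :: β) (by have := h.1; grind) (by
    have := h.2.1
    simp only [List.isChain_cons_cons]
    grind)
  simp at this

/-- First exit from a predicate along a list. -/
theorem rp_first_exit {V : Type} (p : V → Prop) : ∀ (β : List V) (u : V), p u →
    (∃ e ∈ β, ¬ p e) → ∃ γ c d δ, u :: β = γ ++ c :: d :: δ ∧ (∀ v ∈ γ, p v) ∧ p c ∧ ¬ p d := by
  intro β
  induction β with
  | nil => rintro u _ ⟨e, he, _⟩; simp at he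
  | cons v β ih =>
    rintro u hu ⟨e, he, hpe⟩
    by_cases hv : p v
    · have : e ∈ β := by
        rcases List.mem_cons.1 he with rfl | h
        · exact absurd hv hpe
        · exact h
      obtain ⟨γ, c, d, δ, h1, h2, h3, h4⟩ := ih v hv ⟨e, this, hpe⟩
      exact ⟨u :: γ, c, d, δ, by rw [h1]; rfl, by
        intro w hw
        rcases List.mem_cons.1 hw with rfl | hw
        · exact hu
        · exact h2 w hw, h3, h4⟩
    · exact ⟨[], u, v, β, rfl, by simp, hu, hv⟩

theorem rp_edge_split {V : Type} {G : SimpleGraph V} {a b u v : V} (p : G.Walk a b)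
    (h : s(u, v) ∈ p.edges) : ∃ α β, p.support = α ++ u :: v :: β ∨
      p.support = α ++ v :: u :: β := by
  induction p with
  | nil => simp at h
  | cons hadj p ih =>
    rename_i a' b' c'
    rw [SimpleGraph.Walk.edges_cons, List.mem_cons] at h
    rcases h with h | h
    · obtain ⟨τ, hτ⟩ : ∃ τ, p.support = b' :: τ := ⟨_, p.cons_tail_support.symm⟩
      refine ⟨[], τ, ?_⟩
      rw [SimpleGraph.Walk.support_cons, hτ]
      rw [Sym2.eq_iff] at h
      rcases h with ⟨rfl, rfl⟩ | ⟨rfl, rfl⟩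
      · left; rfl
      · right; rfl
    · obtain ⟨α, β, h⟩ := ih h
      refine ⟨a' :: α, β, ?_⟩
      rw [SimpleGraph.Walk.support_cons]
      rcases h with h | h
      · left; rw [h]; rfl
      · right; rw [h]; rfl

theorem TreeRep.rp_adj {V W : Type} {G : SimpleGraph V} {T : SimpleGraph W} (R : TreeRep G T)
    {u v : V} {t : W} (h : u ≠ v) (hu : t ∈ R.S u) (hv : t ∈ R.S v) : G.Adj u v :=
  (R.adj_iff u v h).2 ⟨t, hu, hv⟩

theorem TreeRep.rp_common {V W : Type} {G : SimpleGraph V} {T : SimpleGraph W} (R : TreeRep G T)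
    {u v : V} (h : G.Adj u v) : ∃ t, t ∈ R.S u ∧ t ∈ R.S v :=
  (R.adj_iff u v h.ne).1 h

/-- Walking from a vertex inside `X - x` to a vertex leaving `X`, one passes the bag of `x`. -/
theorem rp_entry {V W : Type} {G : SimpleGraph V} {T : SimpleGraph W} (R : TreeRep G T)
    {r x : W} {l : List V} (hl : l.IsChain G.Adj) {u e : V} (hu : u ∈ l)
    (huX : R.S u ⊆ rootedSubtree T r x) (hux : x ∉ R.S u) (hlast : l.getLast? = some e)
    (he : ∃ t ∈ R.S e, t ∉ rootedSubtree T r x) :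
    ∃ γ c d δ, l = γ ++ c :: d :: δ ∧ R.S c ⊆ rootedSubtree T r x ∧ x ∉ R.S c ∧ x ∈ R.S d := by
  obtain ⟨α, β, rfl⟩ := List.append_of_mem hu
  obtain ⟨t, hte, htX⟩ := he
  have heβ : e ∈ β := by
    have hue : u ≠ e := by rintro rfl; exact htX (huX hte)
    have := List.mem_of_getLast? hlast
    rw [List.getLast?_append] at hlast
    rcases β with _ | ⟨v, β⟩
    · simp at hlast; exact absurd hlast hue
    · have : (v :: β).getLast? = some e := by simpa using hlast
      exact List.mem_of_getLast? this
  obtain ⟨γ, c, d, δ, h1, h2, ⟨h3, h3'⟩, h4⟩ :=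
    rp_first_exit (fun v => R.S v ⊆ rootedSubtree T r x ∧ x ∉ R.S v) β u ⟨huX, hux⟩
      ⟨e, heβ, fun h => htX (h.1 hte)⟩
  have hl' : α ++ u :: β = (α ++ γ) ++ c :: d :: δ := by rw [h1, List.append_assoc]
  refine ⟨α ++ γ, c, d, δ, hl', h3, h3', ?_⟩
  rw [hl'] at hl
  have hcd : G.Adj c d := by
    simp only [List.isChain_append, List.isChain_cons_cons] at hl
    exact hl.2.1.1
  obtain ⟨t', htc, htd⟩ := R.rp_common hcd
  by_contra hxd
  apply h4
  refine ⟨fun s hs => ?_, hxd⟩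
  by_contra hsX
  exact hxd (rp_root_mem (R.subtree_connected d) htd hs (h3 htc) hsX)

/-- Every captured path whose ends leave `X` has a vertex in the bag of `x`. -/
theorem rp_bag {V W : Type} {G : SimpleGraph V} {T : SimpleGraph W} (R : TreeRep G T)
    {r x : W} {a b : V} (P : G.Walk a b)
    (hcap : (R.core P.toSubgraph ∩ rootedSubtree T r x).Nonempty)
    (hb : ∃ t ∈ R.S b, t ∉ rootedSubtree T r x) : ∃ v, x ∈ R.S v := by
  obtain ⟨t, ⟨u, v, huv, htu, htv⟩, htX⟩ := hcap
  by_cases hux : x ∈ R.S u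
  · exact ⟨u, hux⟩
  have huX : R.S u ⊆ rootedSubtree T r x := by
    intro s hs
    by_contra hsX
    exact hux (rp_root_mem (R.subtree_connected u) htu hs htX hsX)
  have huP : u ∈ P.support := by
    rw [← SimpleGraph.Walk.mem_verts_toSubgraph]; exact huv.fst_mem
  obtain ⟨γ, c, d, δ, -, -, -, h⟩ := rp_entry R P.isChain_adj_support huP huX hux (e := b)
    (by rw [List.getLast?_eq_some_getLast P.support_ne_nil, P.getLast_support]) hb
  exact ⟨d, h⟩

/-- The deepest vertex of the bag of `x` along `q`. -/
theorem rp_deepest {V W : Type} [Fintype V] {G : SimpleGraph V} {T : SimpleGraph W}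
    (R : TreeRep G T) {x z : W} (q : T.Walk x z) (hq : q.IsPath) (hne : ∃ v, x ∈ R.S v) :
    ∃ w, x ∈ R.S w ∧ ∀ v, x ∈ R.S v → ∀ y ∈ q.support, y ∈ R.S v → y ∈ R.S w := by
  classical
  let f : V → ℕ := fun v => (q.support.toFinset.filter (fun y => y ∈ R.S v)).card
  obtain ⟨w, hw, hmax⟩ := (Finset.univ.filter (fun v => x ∈ R.S v)).exists_max_image f
    (by obtain ⟨v, hv⟩ := hne; exact ⟨v, by simpa using hv⟩)
  have hw : x ∈ R.S w := by simpa using hw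
  refine ⟨w, hw, fun v hv y hy hyv => ?_⟩
  by_contra hyw
  have hlt : f w < f v := by
    apply Finset.card_lt_card
    rw [Finset.ssubset_iff_of_subset]
    · exact ⟨y, by simp [hy, hyv], by simp [hyw]⟩
    · intro y' hy'
      simp only [Finset.mem_filter, List.mem_toFinset] at hy' ⊢
      refine ⟨hy'.1, ?_⟩
      rcases List.prefix_or_prefix_of_prefix (q.support_takeUntil_prefix_support hy)
        (q.support_takeUntil_prefix_support hy'.1) with h | h
      · exact absurd (rp_convex R.isTree (R.subtree_connected w) hw hy'.2 _
          (hq.takeUntil hy'.1) y (h.subset (SimpleGraph.Walk.end_mem_support _))) hyw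
      · exact rp_convex R.isTree (R.subtree_connected v) hv hyv _
          (hq.takeUntil hy) y' (h.subset (SimpleGraph.Walk.end_mem_support _))
  have := hmax v (by simpa using hv)
  omega

/-- An ear of the list `l` into a component `C` of `X - V(q)`. -/
def rpEar {V W : Type} {G : SimpleGraph V} {T : SimpleGraph W} (R : TreeRep G T)
    (x : W) (s : Set W) (w : V) (l : List V) (α : List V) (b₁ : V) (σ : List V) (b₂ : V)
    (β : List V) (C : Set W) : Prop :=
  l = α ++ b₁ :: (σ ++ b₂ :: β) ∧ x ∈ R.S b₁ ∧ G.Adj w b₂ ∧ IsCompOf T s C ∧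
    ∀ v ∈ σ, R.S v ⊆ C

theorem rp_ear {V W : Type} {G : SimpleGraph V} {T : SimpleGraph W} (R : TreeRep G T)
    {r x z : W} (q : T.Walk x z) (hq : q.IsPath) {w : V} (hw : x ∈ R.S w)
    (hdeep : ∀ v, x ∈ R.S v → ∀ y ∈ q.support, y ∈ R.S v → y ∈ R.S w)
    {a b : V} (P : G.Walk a b) (hP : IsLongestPath G P) (hwP : w ∉ P.support)
    (hcap : (R.core P.toSubgraph ∩ rootedSubtree T r x).Nonempty)
    (ha : ∃ t ∈ R.S a, t ∉ rootedSubtree T r x)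
    (hb : ∃ t ∈ R.S b, t ∉ rootedSubtree T r x) :
    ∃ α b₁ σ b₂ β C, rpEar R x (rootedSubtree T r x \ {y : W | y ∈ q.support}) w
      P.support.reverse α b₁ σ b₂ β C := by
  have hmax := rp_max_of_longest hP
  have hne : ∀ v ∈ P.support, v ≠ w := fun v hv h => hwP (h ▸ hv)
  -- an edge captured by `X` with one end inside `X - x`
  obtain ⟨u, huP, huX, hux⟩ : ∃ u ∈ P.support, R.S u ⊆ rootedSubtree T r x ∧ x ∉ R.S u := by
    obtain ⟨t, ⟨u, v, huv, htu, htv⟩, htX⟩ := hcap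
    have key : ∀ u, t ∈ R.S u → x ∉ R.S u → R.S u ⊆ rootedSubtree T r x := by
      intro u htu hux s hs
      by_contra hsX
      exact hux (rp_root_mem (R.subtree_connected u) htu hs htX hsX)
    have huP : u ∈ P.support := by
      rw [← SimpleGraph.Walk.mem_verts_toSubgraph]; exact huv.fst_mem
    have hvP : v ∈ P.support := by
      rw [← SimpleGraph.Walk.mem_verts_toSubgraph]; exact huv.snd_mem
    by_cases hux : x ∈ R.S u
    · by_cases hvx : x ∈ R.S v
      · exfalso
        have hau := R.rp_adj (hne u huP) hux hw
        have hav := R.rp_adj (hne v hvP) hvx hw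
        obtain ⟨α, β, h | h⟩ :=
          rp_edge_split P (SimpleGraph.Walk.adj_toSubgraph_iff_mem_edges.1 huv)
        · rw [h] at hmax hwP
          exact hmax.no_insert hwP hau hav.symm
        · rw [h] at hmax hwP
          exact hmax.no_insert hwP hav hau.symm
      · exact ⟨v, hvP, key v htv hvx, hvx⟩
    · exact ⟨u, huP, key u htu hux, hux⟩
  obtain ⟨γ, c, d, δ, hl, hcX, hcx, hdx⟩ := rp_entry R P.isChain_adj_support huP huX hux (e := b)
    (by rw [List.getLast?_eq_some_getLast P.support_ne_nil, P.getLast_support]) hb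
  have hrev : P.support.reverse = δ.reverse ++ d :: c :: γ.reverse := by
    rw [hl]; simp
  have hmr := hmax.rev
  have hwr : w ∉ P.support.reverse := by simpa using hwP
  rw [hrev] at hmr hwr ⊢
  have hdw : d ≠ w := by rintro rfl; simp at hwr
  have hcw : c ≠ w := by rintro rfl; simp at hwr
  have hdc : G.Adj d c := by
    have := hmr.2.1
    simp only [List.isChain_append, List.isChain_cons_cons] at this
    exact this.2.1.1
  -- vertices of `S w` are not in both `S d` and `S c`
  have hno : ∀ t, t ∈ R.S d → t ∈ R.S c → t ∉ R.S w := fun t h1 h2 h3 =>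
    hmr.no_insert hwr (R.rp_adj hdw h1 h3) (R.rp_adj hcw.symm h3 h2)
  obtain ⟨t, htd, htc⟩ := R.rp_common hdc
  have htQ : t ∉ q.support := fun h => hno t htd htc (hdeep d hdx t h htd)
  obtain ⟨C, hC, htC⟩ := rp_comp_exists T
    (s := rootedSubtree T r x \ {y : W | y ∈ q.support}) ⟨hcX htc, htQ⟩
  have hatt : ∀ c' d', c' ∈ C → d' ∉ C → T.Adj c' d' → d' ∈ rootedSubtree T r x →
      d' ∈ R.S d ∧ d' ∈ R.S w := by
    intro c' d' hc' hd' hadj hdX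
    have hdq : d' ∈ q.support := by
      by_contra hdq
      exact hd' (hC.2.2.2 hc' ⟨hdX, hdq⟩ hadj)
    have h1 := rp_attach R.isTree (R.subtree_connected d) q hq hC hdx htd htC hc' hdq hadj
    exact ⟨h1, hdeep d hdx d' hdq h1⟩
  have hcC : R.S c ⊆ C := by
    intro s hs
    by_contra hsC
    obtain ⟨c', d', _, hd', hcC', hdC', hadj⟩ :=
      rp_boundary (R.subtree_connected c) htc hs htC hsC
    obtain ⟨h1, h2⟩ := hatt c' d' hcC' hdC' hadj (hcX hd')
    exact hno d' h1 hd' h2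
  obtain ⟨ta, hta, htaX⟩ := ha
  have haγ : a ∈ γ.reverse := by
    have hca : c ≠ a := by rintro rfl; exact htaX (hcX hta)
    have hda := P.cons_tail_support
    rw [hl] at hda
    rcases γ with _ | ⟨v, γ⟩
    · simp only [List.nil_append, List.cons.injEq] at hda
      exact absurd hda.1.symm hca
    · simp only [List.cons_append, List.cons.injEq] at hda
      simp [hda.1]
  obtain ⟨σ, c₂, b₂, β, h1, h2, h3, h4⟩ :=
    rp_first_exit (fun v => R.S v ⊆ C) γ.reverse c hcC
      ⟨a, haγ, fun h => htaX (hC.2.1 (h hta)).1⟩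
  rw [h1] at hmr hwr ⊢
  refine ⟨δ.reverse, d, σ ++ [c₂], b₂, β, C, by simp, hdx, ?_, hC, ?_⟩
  · have hbw : b₂ ≠ w := by rintro rfl; simp at hwr
    have hadj : G.Adj c₂ b₂ := by
      have := hmr.2.1
      simp only [← List.cons_append, List.isChain_append, List.isChain_cons_cons] at this
      exact this.2.1.2.1.1
    obtain ⟨t₂, ht₂, ht₂'⟩ := R.rp_common hadj
    obtain ⟨s, hs, hsC⟩ := Set.not_subset.1 h4
    obtain ⟨c', d', _, hd', hcC', hdC', hadj'⟩ :=
      rp_boundary (R.subtree_connected b₂) ht₂' hs (h3 ht₂) hsC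
    by_cases hdX : d' ∈ rootedSubtree T r x
    · exact R.rp_adj hbw.symm (hatt c' d' hcC' hdC' hadj' hdX).2 hd'
    · exact R.rp_adj hbw.symm hw
        (rp_root_mem (R.subtree_connected b₂) ht₂' hd' (hC.2.1 (h3 ht₂)).1 hdX)
  · intro v hv
    rcases List.mem_append.1 hv with hv | hv
    · exact h2 v hv
    · rw [List.mem_singleton.1 hv]; exact h3

/-- The exchange argument. -/
theorem rp_exchange {V : Type} {G : SimpleGraph V} {l α σ β l' α' σ' β' : List V}
    {w b₁ b₂ c₁ c₂ : V} (hl : rpMaxList G l) (hl' : rpMaxList G l')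
    (e : l = α ++ b₁ :: (σ ++ b₂ :: β)) (e' : l' = α' ++ c₁ :: (σ' ++ c₂ :: β'))
    (hlen : σ.length ≤ σ'.length) (hwl : w ∉ l) (hwl' : w ∉ l') (h1 : c₁ ∉ l) (h2 : c₂ ∉ l)
    (hdis : ∀ v ∈ σ', v ∉ l) (hbc : G.Adj b₁ c₁) (hw2 : G.Adj w b₂) (hw2' : G.Adj w c₂) :
    False := by
  have hch : (c₁ :: σ' ++ [c₂]).IsChain G.Adj := by
    apply hl'.2.1.infix
    exact ⟨α', β', by rw [e']; simp⟩
  have hchα : (α ++ [b₁]).IsChain G.Adj := hl.2.1.infix ⟨[], σ ++ b₂ :: β, by rw [e]; simp⟩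
  have hchβ : (b₂ :: β).IsChain G.Adj := hl.2.1.infix ⟨α ++ b₁ :: σ, [], by rw [e]; simp⟩
  have hnd : (c₁ :: σ' ++ [c₂]).Nodup := by
    have := hl'.1
    rw [e'] at this
    grind
  have hnd2 : (α ++ b₁ :: b₂ :: β).Nodup := by
    have := hl.1
    rw [e] at this
    grind
  have hfin : ∀ M : List V, M.Nodup → (∀ v ∈ M, v ∉ l) → w ∉ M →
      ((α ++ [b₁]) ++ (M ++ w :: b₂ :: β)).Nodup := by
    intro M hM hMl hwM
    have hs : ∀ v ∈ α ++ b₁ :: b₂ :: β, v ∈ l := by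
      intro v hv
      rw [e]
      simp only [List.mem_append, List.mem_cons] at hv ⊢
      tauto
    have hw' : w ∉ α ++ b₁ :: b₂ :: β := fun h => hwl (hs w h)
    have hM' : ∀ v ∈ M, v ∉ α ++ b₁ :: b₂ :: β := fun v hv h => hMl v hv (hs v h)
    clear hMl hs hdis hwl hwl' h1 h2 e e' hnd hl hl' hch hchα hchβ
    simp only [List.nodup_append, List.nodup_cons, List.mem_append, List.mem_cons,
      not_or] at *
    grind
  have hN := hfin _ hnd (by
    intro v hv
    simp only [List.mem_append, List.mem_cons, List.not_mem_nil, or_false] at hv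
    rcases hv with (rfl | hv) | rfl
    · exact h1
    · exact hdis v hv
    · exact h2) (by
    rw [e'] at hwl'
    simp only [List.mem_append, List.mem_cons, List.not_mem_nil, or_false] at hwl' ⊢
    tauto)
  have := hl.2.2 ((α ++ [b₁]) ++ ((c₁ :: σ' ++ [c₂]) ++ w :: b₂ :: β)) hN (by
    refine List.isChain_append.2 ⟨hchα, List.isChain_append.2 ⟨hch, ?_, ?_⟩, ?_⟩
    · exact List.isChain_cons_cons.2 ⟨hw2, hchβ⟩
    · intro u hu v hv
      rw [List.getLast?_concat] at hu
      simp at hu hv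
      subst hu hv
      exact hw2'.symm
    · intro u hu v hv
      rw [List.getLast?_concat] at hu
      simp at hu hv
      subst hu hv
      exact hbc)
  rw [e] at this
  simp at this
  omega

/-- For a connected chordal `G` with minimal rooted tree representation,
a subtree `X` rooted at `x`, the `x`–`z` path `Q = q` in `X`, and a family `𝒫 = P` of
longest paths with the core capture property for `X` whose endpoints' subtrees all leave
`X`, there is `A ⊆ V(G)` with `|A| ≤ 4` such that the paths of `𝒫` disjoint from `A`
either form an empty family, or some component `X'` of `X − V(Q)` has the core capture
property for them. -/
theorem roundpath {V W : Type} [Fintype V] [Fintype W] (G : SimpleGraph V)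
    (T : SimpleGraph W) (hconn : G.Connected) (hchordal : IsChordal G)
    (R : TreeRep G T) (hmin : R.IsMinimal) (r : W)
    (x z : W) (hz : z ∈ rootedSubtree T r x)
    (q : T.Walk x z) (hq : q.IsPath) (hqX : ∀ w ∈ q.support, w ∈ rootedSubtree T r x)
    {ι : Type} (a b : ι → V) (P : ∀ i : ι, G.Walk (a i) (b i))
    (hP : ∀ i : ι, IsLongestPath G (P i))
    (hcap : ∀ i : ι, (R.core (P i).toSubgraph ∩ rootedSubtree T r x).Nonempty)
    (hends : ∀ i : ι, (∃ t ∈ R.S (a i), t ∉ rootedSubtree T r x) ∧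
      (∃ t ∈ R.S (b i), t ∉ rootedSubtree T r x)) :
    ∃ A : Set V, A.Finite ∧ A.ncard ≤ 4 ∧
      ((∀ i : ι, ∃ v ∈ A, v ∈ (P i).support) ∨
        ∃ X' : Set W, IsCompOf T (rootedSubtree T r x \ {w : W | w ∈ q.support}) X' ∧
          ∀ i : ι, (∀ v ∈ A, v ∉ (P i).support) →
            (R.core (P i).toSubgraph ∩ X').Nonempty) := by
  classical
  by_cases hι : Nonempty ι
  swap
  · exact ⟨∅, Set.finite_empty, by simp, Or.inl fun i => absurd ⟨i⟩ hι⟩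
  obtain ⟨i₀⟩ := hι
  obtain ⟨w, hw, hdeep⟩ := rp_deepest R q hq (rp_bag R (P i₀) (hcap i₀) (hends i₀).2)
  by_cases hall : ∀ i, w ∈ (P i).support
  · exact ⟨{w}, Set.finite_singleton w, by simp, Or.inl fun i => ⟨w, rfl, hall i⟩⟩
  have hear := fun i (hi : w ∉ (P i).support) =>
    rp_ear R q hq hw hdeep (P i) (hP i) hi (hcap i) (hends i).1 (hends i).2
  let K : Set ℕ := {k | ∃ i, w ∉ (P i).support ∧ ∃ α b₁ σ b₂ β C,
    rpEar R x (rootedSubtree T r x \ {y : W | y ∈ q.support}) w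
      (P i).support.reverse α b₁ σ b₂ β C ∧ σ.length = k}
  have hKne : K.Nonempty := by
    push Not at hall
    obtain ⟨i, hi⟩ := hall
    obtain ⟨α, b₁, σ, b₂, β, C, h⟩ := hear i hi
    exact ⟨_, i, hi, α, b₁, σ, b₂, β, C, h, rfl⟩
  have hKbdd : BddAbove K := by
    refine ⟨Fintype.card V, ?_⟩
    rintro k ⟨i, -, α, b₁, σ, b₂, β, C, h, rfl⟩
    have hn := (rp_max_of_longest (hP i)).rev.1
    rw [h.1] at hn
    have : σ.Nodup := by grind
    exact this.length_le_card
  obtain ⟨j, hj, α', c₁, σ', c₂, β', C, hC, hk⟩ := Nat.sSup_mem hKne hKbdd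
  refine ⟨{w, c₁, c₂}, Set.toFinite _, ?_, Or.inr ⟨C, hC.2.2.2.1, fun i hi => ?_⟩⟩
  · have e1 := Set.ncard_insert_le w {c₁, c₂}
    have e2 := Set.ncard_insert_le c₁ {c₂}
    have e3 := Set.ncard_singleton c₂
    omega
  have hwi : w ∉ (P i).support := hi w (by simp)
  have hc1 : c₁ ∉ (P i).support := hi c₁ (by simp)
  have hc2 : c₂ ∉ (P i).support := hi c₂ (by simp)
  obtain ⟨α, b₁, σ, b₂, β, D, hD⟩ := hear i hwi
  have hlen : σ.length ≤ σ'.length := by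
    rw [hk]
    exact le_csSup hKbdd ⟨i, hwi, α, b₁, σ, b₂, β, D, hD, rfl⟩
  by_contra hcore
  refine rp_exchange (rp_max_of_longest (hP i)).rev (rp_max_of_longest (hP j)).rev hD.1 hC.1 hlen
    (by simpa using hwi) (by simpa using hj) (by simpa using hc1) (by simpa using hc2) ?_ ?_
    hD.2.2.1 hC.2.2.1
  · intro v hv hvl
    have hvP : v ∈ (P i).support := by simpa using hvl
    have hvC := hC.2.2.2.2 v hv
    rw [SimpleGraph.Walk.mem_support_iff_exists_mem_edges] at hvP
    rcases hvP with rfl | ⟨e, he, hve⟩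
    · obtain ⟨t, ht, htX⟩ := (hends i).2
      exact htX (hC.2.2.2.1.2.1 (hvC ht)).1
    · obtain ⟨u, rfl⟩ := Sym2.mem_iff_exists.1 hve
      have hadj : G.Adj v u := (P i).adj_of_mem_edges he
      obtain ⟨t, ht, ht'⟩ := R.rp_common hadj
      exact hcore ⟨t, ⟨v, u, SimpleGraph.Walk.adj_toSubgraph_iff_mem_edges.2 he, ht, ht'⟩, hvC ht⟩
  · refine R.rp_adj ?_ hD.2.1 hC.2.1
    rintro rfl
    apply hc1
    have : b₁ ∈ (P i).support.reverse := by rw [hD.1]; simp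
    simpa using this
end

section
/- Let G be a connected chordal graph with a minimal rooted tree representation T, and let X be a rooted subtree of T with root x. Let 𝒫 be a family of longest paths of G such that X has the core capture property for 𝒫 and such that each endpoint of each P ∈ 𝒫 has a subtree containing a vertex outside X. Then there is a set A ⊆ V(G) that intersects each path in 𝒫 with |A| ≤ 4 · ccg(X, x). -/
open SimpleGraph

/-- Walk-based connectivity of a vertex set. -/
def WConn {W : Type} (T : SimpleGraph W) (C : Set W) : Prop :=
  ∀ s ∈ C, ∀ t ∈ C, ∃ p : T.Walk s t, ∀ w ∈ p.support, w ∈ C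

theorem WConn.of_induce {W : Type} {T : SimpleGraph W} {C : Set W}
    (h : (T.induce C).Connected) : WConn T C := by
  intro s hs t ht
  obtain ⟨p⟩ := h.preconnected ⟨s, hs⟩ ⟨t, ht⟩
  refine ⟨p.map (SimpleGraph.Embedding.induce C).toHom, ?_⟩
  intro w hw
  obtain ⟨z, _, rfl⟩ := List.mem_map.1
    ((SimpleGraph.Walk.support_map (SimpleGraph.Embedding.induce C).toHom p) ▸ hw)
  exact z.2

theorem WConn.to_induce {W : Type} {T : SimpleGraph W} {C : Set W} (hne : C.Nonempty)
    (h : WConn T C) : (T.induce C).Connected := by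
  obtain ⟨s, hs⟩ := hne
  apply SimpleGraph.induce_connected_of_patches s hs
  intro t ht
  obtain ⟨p, hp⟩ := h s hs t ht
  refine ⟨{w | w ∈ p.support}, hp, p.start_mem_support, p.end_mem_support, ?_⟩
  exact p.connected_induce_support.preconnected _ _

theorem WConn.union {W : Type} {T : SimpleGraph W} {A B : Set W} (hA : WConn T A)
    (hB : WConn T B) (h : (A ∩ B).Nonempty) : WConn T (A ∪ B) := by
  obtain ⟨m, hmA, hmB⟩ := h
  have key : ∀ s ∈ A ∪ B, ∃ p : T.Walk s m, ∀ w ∈ p.support, w ∈ A ∪ B := by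
    rintro s (hs | hs)
    · obtain ⟨p, hp⟩ := hA s hs m hmA
      exact ⟨p, fun w hw => Or.inl (hp w hw)⟩
    · obtain ⟨p, hp⟩ := hB s hs m hmB
      exact ⟨p, fun w hw => Or.inr (hp w hw)⟩
  intro s hs t ht
  obtain ⟨p, hp⟩ := key s hs
  obtain ⟨q, hq⟩ := key t ht
  refine ⟨p.append q.reverse, fun w hw => ?_⟩
  rw [SimpleGraph.Walk.mem_support_append_iff, SimpleGraph.Walk.support_reverse,
    List.mem_reverse] at hw
  exact hw.elim (hp w) (hq w)

/-- In a tree a path between two vertices of a connected set stays in the set. -/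
theorem WConn.path {W : Type} {T : SimpleGraph W} (hT : T.IsTree) {C : Set W}
    (hC : WConn T C) {s t : W} (hs : s ∈ C) (ht : t ∈ C) (p : T.Walk s t) (hp : p.IsPath) :
    ∀ w ∈ p.support, w ∈ C := by
  classical
  obtain ⟨q, hq⟩ := hC s hs t ht
  have h1 : p = q.bypass :=
    congrArg Subtype.val ((hT.isAcyclic.subsingleton_path _ _).elim ⟨p, hp⟩ ⟨q.bypass, q.bypass_isPath⟩)
  intro w hw
  rw [h1] at hw
  exact hq w (q.support_bypass_subset_support hw)

/-- A path inside a connected set. -/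
theorem WConn.exists_path {W : Type} {T : SimpleGraph W} {C : Set W}
    (hC : WConn T C) {s t : W} (hs : s ∈ C) (ht : t ∈ C) :
    ∃ p : T.Walk s t, p.IsPath ∧ ∀ w ∈ p.support, w ∈ C := by
  classical
  obtain ⟨q, hq⟩ := hC s hs t ht
  exact ⟨q.bypass, q.bypass_isPath, fun w hw => hq w (q.support_bypass_subset_support hw)⟩

/-- First crossing of a walk out of a predicate. -/
theorem walk_cross {V : Type} {G : SimpleGraph V} (Good : V → Prop) {a b : V}
    (p : G.Walk a b) (ha : Good a) {c : V} (hc : c ∈ p.support) (hbad : ¬ Good c) :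
    ∃ (u y : V) (α : G.Walk a u) (h : G.Adj u y) (β : G.Walk y b),
      p = α.append (SimpleGraph.Walk.cons h β) ∧ (∀ z ∈ α.support, Good z) ∧ ¬ Good y := by
  induction p with
  | nil =>
    simp only [SimpleGraph.Walk.support_nil, List.mem_singleton] at hc
    subst hc
    exact absurd ha hbad
  | @cons a d b h p ih =>
    by_cases hd : Good d
    · have hc' : c ∈ p.support := by
        rw [SimpleGraph.Walk.support_cons, List.mem_cons] at hc
        rcases hc with rfl | hc
        · exact absurd ha hbad
        · exact hc
      obtain ⟨u, y, α, h', β, rfl, hα, hy⟩ := ih hd hc'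
      refine ⟨u, y, SimpleGraph.Walk.cons h α, h', β, rfl, ?_, hy⟩
      intro z hz
      rw [SimpleGraph.Walk.support_cons, List.mem_cons] at hz
      rcases hz with rfl | hz
      · exact ha
      · exact hα z hz
    · refine ⟨a, d, SimpleGraph.Walk.nil, h, p, rfl, ?_, hd⟩
      intro z hz
      simp only [SimpleGraph.Walk.support_nil, List.mem_singleton] at hz
      subst hz
      exact ha

theorem walk_edge_split {V : Type} {G : SimpleGraph V} {a b : V} (p : G.Walk a b) {c d : V}
    (h : s(c, d) ∈ p.edges) :
    ∃ (u y : V) (α : G.Walk a u) (h : G.Adj u y) (β : G.Walk y b),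
      p = α.append (SimpleGraph.Walk.cons h β) ∧ ((u = c ∧ y = d) ∨ (u = d ∧ y = c)) := by
  induction p with
  | nil => simp at h
  | @cons a e b h' p ih =>
    rw [SimpleGraph.Walk.edges_cons, List.mem_cons] at h
    rcases h with h | h
    · refine ⟨a, e, SimpleGraph.Walk.nil, h', p, rfl, ?_⟩
      rw [Sym2.eq_iff] at h
      tauto
    · obtain ⟨u, y, α, h2, β, rfl, hh⟩ := ih h
      exact ⟨u, y, SimpleGraph.Walk.cons h' α, h2, β, rfl, hh⟩

/-- Crossing edge between two intersecting connected sets of a tree. -/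
theorem tree_edge_cross {W : Type} {T : SimpleGraph W} (hT : T.IsTree) {B C : Set W}
    (hB : WConn T B) (hC : WConn T C) {s s' m : W} (hs : s ∈ B) (hs' : s' ∈ C)
    (h : T.Adj s s') (hmB : m ∈ B) (hmC : m ∈ C) : s' ∈ B ∨ s ∈ C := by
  by_contra hcon
  push Not at hcon
  obtain ⟨q, hq, hqC⟩ := hC.exists_path hs' hmC
  have hpath : (SimpleGraph.Walk.cons h q).IsPath := by
    rw [SimpleGraph.Walk.cons_isPath_iff]
    exact ⟨hq, fun hh => hcon.2 (hqC s hh)⟩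
  exact hcon.1 (hB.path hT hs hmB _ hpath s' (by simp))

/-- Helly property for three subtrees. -/
theorem tree_helly {W : Type} {T : SimpleGraph W} (hT : T.IsTree) {A B C : Set W}
    (hA : WConn T A) (hB : WConn T B) (hC : WConn T C) (hAB : (A ∩ B).Nonempty)
    (hBC : (B ∩ C).Nonempty) (hAC : (A ∩ C).Nonempty) : ∃ w, w ∈ A ∧ w ∈ B ∧ w ∈ C := by
  obtain ⟨m, hmB, hmC⟩ := hBC
  obtain ⟨s, hsA, hsB⟩ := hAB
  obtain ⟨t, htA, htC⟩ := hAC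
  obtain ⟨p, hp, hpA⟩ := hA.exists_path hsA htA
  have hpU : ∀ w ∈ p.support, w ∈ B ∪ C :=
    (hB.union hC ⟨m, hmB, hmC⟩).path hT (Or.inl hsB) (Or.inr htC) p hp
  by_contra hcon
  push Not at hcon
  have htB : ¬ t ∈ B := fun h => hcon t htA h htC
  obtain ⟨u, y, α, h, β, rfl, hα, hy⟩ :=
    walk_cross (fun w => w ∈ B) p hsB p.end_mem_support htB
  have huB := hα u α.end_mem_support
  have huA := hpA u (by simp [SimpleGraph.Walk.mem_support_append_iff])
  have hyC := (hpU y (by simp [SimpleGraph.Walk.mem_support_append_iff])).resolve_left hy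
  rcases tree_edge_cross hT hB hC huB hyC h hmB hmC with h1 | h1
  · exact hy h1
  · exact hcon u huA huB h1

/-- Two edges between disjoint connected sets of a tree coincide. -/
theorem tree_edge_unique {W : Type} {T : SimpleGraph W} (hT : T.IsTree) {A B : Set W}
    (hA : WConn T A) (hB : WConn T B) (hd : ∀ w, w ∈ A → w ∈ B → False) {a a' b b' : W}
    (ha : a ∈ A) (ha' : a' ∈ A) (hb : b ∈ B) (hb' : b' ∈ B) (h : T.Adj a b)
    (h' : T.Adj a' b') : a = a' := by
  obtain ⟨p, hp, hpA⟩ := hA.exists_path ha' ha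
  have hpath : (SimpleGraph.Walk.cons h'.symm p).IsPath := by
    rw [SimpleGraph.Walk.cons_isPath_iff]
    exact ⟨hp, fun hh => hd _ (hpA _ hh) hb'⟩
  have hsing : WConn T ({a} : Set W) := by
    intro s hs t ht
    obtain rfl : s = a := hs
    obtain rfl : t = s := ht
    exact ⟨SimpleGraph.Walk.nil, by simp⟩
  have hab : WConn T (({a, b} : Set W)) := by
    intro s hs t ht
    rcases hs with rfl | rfl <;> rcases ht with rfl | rfl
    · exact ⟨SimpleGraph.Walk.nil, by simp⟩
    · exact ⟨SimpleGraph.Walk.cons h SimpleGraph.Walk.nil, by simp⟩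
    · exact ⟨SimpleGraph.Walk.cons h.symm SimpleGraph.Walk.nil, by simp⟩
    · exact ⟨SimpleGraph.Walk.nil, by simp⟩
  have hU : WConn T ({a, b} ∪ B) := hab.union hB ⟨b, by simp, hb⟩
  have := hU.path hT (Or.inr hb') (Or.inl (by simp)) _ hpath a' (by simp)
  rcases this with (h1 | h1) | h1
  · exact h1.symm
  · obtain rfl : a' = b := h1
    exact (hd _ ha' hb).elim
  · exact (hd _ ha' h1).elim

/-- Comparability along a path from `x`. -/
theorem path_compare {W : Type} {T : SimpleGraph W} (hT : T.IsTree) {x z : W}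
    (p : T.Walk x z) (hp : p.IsPath) {A B : Set W} (hA : WConn T A) (hB : WConn T B)
    (hxA : x ∈ A) (hxB : x ∈ B) {q q' : W} (hq : q ∈ p.support) (hq' : q' ∈ p.support)
    (hqA : q ∈ A) (hqB : q' ∈ B) : q' ∈ A ∨ q ∈ B := by
  classical
  by_cases hin : q' ∈ (p.takeUntil q hq).support
  · exact Or.inl (hA.path hT hxA hqA _ (hp.takeUntil hq) q' hin)
  · right
    have hin' : q' ∈ (p.dropUntil q hq).support := by
      have := hq'
      rw [← p.take_spec hq, SimpleGraph.Walk.mem_support_append_iff] at this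
      exact this.resolve_left hin
    have hpath : ((p.takeUntil q hq).append ((p.dropUntil q hq).takeUntil q' hin')).IsPath := by
      have h1 : p = ((p.takeUntil q hq).append ((p.dropUntil q hq).takeUntil q' hin')).append
          ((p.dropUntil q hq).dropUntil q' hin') := by
        rw [← SimpleGraph.Walk.append_assoc, SimpleGraph.Walk.take_spec,
          SimpleGraph.Walk.take_spec]
      rw [h1] at hp
      exact hp.of_append_left
    exact hB.path hT hxB hqB _ hpath q (by simp [SimpleGraph.Walk.mem_support_append_iff])

section Rep
variable {V W : Type} {G : SimpleGraph V} {T : SimpleGraph W}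

theorem TreeRep.wconn (R : TreeRep G T) (u : V) : WConn T (R.S u) :=
  WConn.of_induce (R.subtree_connected u)

theorem TreeRep.S_nonempty (R : TreeRep G T) (u : V) : (R.S u).Nonempty := by
  obtain ⟨t⟩ := (R.subtree_connected u).nonempty
  exact ⟨t.1, t.2⟩

theorem TreeRep.adj_of (R : TreeRep G T) {u v : V} (hne : u ≠ v) {t : W} (hu : t ∈ R.S u)
    (hv : t ∈ R.S v) : G.Adj u v := (R.adj_iff u v hne).2 ⟨t, hu, hv⟩

theorem TreeRep.meet_of (R : TreeRep G T) {u v : V} (h : G.Adj u v) :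
    (R.S u ∩ R.S v).Nonempty := (R.adj_iff u v h.ne).1 h

/-- The union of subtrees along a walk is connected. -/
theorem TreeRep.wconn_walk (R : TreeRep G T) {y y' : V} (σ : G.Walk y y') :
    WConn T {w | ∃ z ∈ σ.support, w ∈ R.S z} := by
  induction σ with
  | @nil u =>
    have : {w | ∃ z ∈ (SimpleGraph.Walk.nil : G.Walk u u).support, w ∈ R.S z} = R.S u := by
      ext w; simp
    rw [this]
    exact R.wconn u
  | @cons u d e h p ih =>
    have : {w | ∃ z ∈ (SimpleGraph.Walk.cons h p).support, w ∈ R.S z}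
        = R.S u ∪ {w | ∃ z ∈ p.support, w ∈ R.S z} := by
      ext w; simp
    rw [this]
    refine (R.wconn u).union ih ?_
    obtain ⟨t, h1, h2⟩ := R.meet_of h
    exact ⟨t, h1, d, p.start_mem_support, h2⟩

/-- The subtree of a vertex missed by a longest path avoids the core of that path. -/
theorem TreeRep.core_avoid (R : TreeRep G T) {a b u y v : V} (α : G.Walk a u)
    (h : G.Adj u y) (β : G.Walk y b)
    (hP : IsLongestPath G (α.append (SimpleGraph.Walk.cons h β)))
    (hv : v ∉ (α.append (SimpleGraph.Walk.cons h β)).support) {t : W} (hu : t ∈ R.S u)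
    (hy : t ∈ R.S y) (htv : t ∈ R.S v) : False := by
  obtain ⟨hpath, hlong⟩ := hP
  have hs : (α.append (SimpleGraph.Walk.cons h β)).support = α.support ++ β.support := by
    simp [SimpleGraph.Walk.support_append]
  rw [hs] at hv
  have hnu : u ≠ v := by
    rintro rfl; exact hv (by simp)
  have hny : v ≠ y := by
    rintro rfl; exact hv (by simp)
  have h1 : G.Adj u v := R.adj_of hnu hu htv
  have h2 : G.Adj v y := R.adj_of hny htv hy
  have hnd := hpath.support_nodup
  rw [hs] at hnd
  have := hlong a b (α.append (SimpleGraph.Walk.cons h1 (SimpleGraph.Walk.cons h2 β))) (by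
    rw [SimpleGraph.Walk.isPath_def]
    have : (α.append (SimpleGraph.Walk.cons h1 (SimpleGraph.Walk.cons h2 β))).support
        = α.support ++ v :: β.support := by
      simp [SimpleGraph.Walk.support_append]
    rw [this]
    rw [List.nodup_append] at hnd ⊢
    grind)
  simp only [SimpleGraph.Walk.length_append, SimpleGraph.Walk.length_cons] at this
  omega

/-- `X` is attached to the rest of the tree only through `x`. -/
def Gated (T : SimpleGraph W) (X : Set W) (x : W) : Prop :=
  ∀ C : Set W, WConn T C → (∃ s ∈ C, s ∈ X) → (∃ t ∈ C, t ∉ X) → x ∈ C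

/-- A segment of `P` inside `X`, of length `n`, avoiding the subtree of `v`. -/
def SegAt (R : TreeRep G T) (X : Set W) (x : W) (v : V) {a b : V} (P : G.Walk a b)
    {u y y' w : V} (α : G.Walk a u) (h : G.Adj u y) (σ : G.Walk y y') (h' : G.Adj y' w)
    (β : G.Walk w b) : Prop :=
  P = α.append (SimpleGraph.Walk.cons h (σ.append (SimpleGraph.Walk.cons h' β))) ∧
  x ∈ R.S u ∧ (∃ t ∈ R.S u, t ∉ X) ∧
  (∀ z ∈ σ.support, R.S z ⊆ X ∧ ∀ t ∈ R.S z, t ∉ R.S v) ∧ (R.S w ∩ R.S v).Nonempty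

theorem SegAt.support {R : TreeRep G T} {X : Set W} {x : W} {v : V} {a b : V}
    {P : G.Walk a b} {u y y' w : V} {α : G.Walk a u} {h : G.Adj u y} {σ : G.Walk y y'}
    {h' : G.Adj y' w} {β : G.Walk w b} (hS : SegAt R X x v P α h σ h' β) :
    P.support = α.support ++ (σ.support ++ β.support) := by
  rw [hS.1]
  simp [SimpleGraph.Walk.support_append]

theorem SegAt.length {R : TreeRep G T} {X : Set W} {x : W} {v : V} {a b : V}
    {P : G.Walk a b} {u y y' w : V} {α : G.Walk a u} {h : G.Adj u y} {σ : G.Walk y y'}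
    {h' : G.Adj y' w} {β : G.Walk w b} (hS : SegAt R X x v P α h σ h' β) :
    P.length = α.length + σ.length + β.length + 2 := by
  rw [hS.1]
  simp [SimpleGraph.Walk.length_append]
  omega

/-- A path crossing into `X` uses a vertex whose subtree contains `x` and leaves `X`. -/
theorem exists_cross (R : TreeRep G T) {X : Set W} {x : W} (hg : Gated T X x) {a b : V}
    (P : G.Walk a b) (ha : ∃ t ∈ R.S a, t ∉ X)
    (hcap : (R.core P.toSubgraph ∩ X).Nonempty) :
    ∃ v, x ∈ R.S v ∧ ∃ t ∈ R.S v, t ∉ X := by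
  obtain ⟨t, ⟨c, d, hcd, htc, htd⟩, htX⟩ := hcap
  by_cases hc : ∃ t ∈ R.S c, t ∉ X
  · exact ⟨c, hg _ (R.wconn c) ⟨t, htc, htX⟩ hc, hc⟩
  · have hcs : c ∈ P.support := by
      rw [← SimpleGraph.Walk.mem_verts_toSubgraph]
      exact hcd.fst_mem
    obtain ⟨u, y, α, h, β, rfl, hα, hy⟩ :=
      walk_cross (fun z => ∃ t ∈ R.S z, t ∉ X) P ha hcs hc
    have hu := hα u α.end_mem_support
    obtain ⟨s, hsu, hsy⟩ := R.meet_of h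
    push Not at hy
    exact ⟨u, hg _ (R.wconn u) ⟨s, hsu, hy s hsy⟩ hu, hu⟩

theorem exists_seg (R : TreeRep G T) {X : Set W} {x : W} (hg : Gated T X x) {v : V}
    (hxv : x ∈ R.S v) {a b : V}
    (P : G.Walk a b) (hP : IsLongestPath G P) (hv : v ∉ P.support)
    (ha : ∃ t ∈ R.S a, t ∉ X) (hb : ∃ t ∈ R.S b, t ∉ X)
    (hcap : (R.core P.toSubgraph ∩ X).Nonempty) :
    ∃ (u y y' w : V) (α : G.Walk a u) (h : G.Adj u y) (σ : G.Walk y y') (h' : G.Adj y' w)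
      (β : G.Walk w b), SegAt R X x v P α h σ h' β := by
  obtain ⟨t, ⟨c, d, hcd, htc, htd⟩, htX⟩ := hcap
  have hin : ∃ c ∈ P.support, ¬ ∃ t ∈ R.S c, t ∉ X := by
    by_contra hcon
    push Not at hcon
    have hcs : c ∈ P.support := by
      rw [← SimpleGraph.Walk.mem_verts_toSubgraph]
      exact hcd.fst_mem
    have hds : d ∈ P.support := by
      rw [← SimpleGraph.Walk.mem_verts_toSubgraph]
      exact hcd.snd_mem
    have hxc := hg _ (R.wconn c) ⟨t, htc, htX⟩ (hcon c hcs)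
    have hxd := hg _ (R.wconn d) ⟨t, htd, htX⟩ (hcon d hds)
    rw [SimpleGraph.Walk.adj_toSubgraph_iff_mem_edges] at hcd
    obtain ⟨u, y, α, h, β, rfl, hh⟩ := walk_edge_split P hcd
    rcases hh with ⟨rfl, rfl⟩ | ⟨rfl, rfl⟩
    · exact R.core_avoid α h β hP hv hxc hxd hxv
    · exact R.core_avoid α h β hP hv hxd hxc hxv
  obtain ⟨c, hcs, hc⟩ := hin
  obtain ⟨u, y, α, h, β, rfl, hα, hy⟩ :=
    walk_cross (fun z => ∃ t ∈ R.S z, t ∉ X) P ha hcs hc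
  have hu := hα u α.end_mem_support
  obtain ⟨s, hsu, hsy⟩ := R.meet_of h
  push Not at hy
  have hxu : x ∈ R.S u := hg _ (R.wconn u) ⟨s, hsu, hy s hsy⟩ hu
  have hyv : ∀ t ∈ R.S y, t ∉ R.S v := by
    intro t ht htv
    obtain ⟨m, hm1, hm2, hm3⟩ := tree_helly R.isTree (R.wconn u) (R.wconn y) (R.wconn v)
      ⟨s, hsu, hsy⟩ ⟨t, ht, htv⟩ ⟨x, hxu, hxv⟩
    exact R.core_avoid α h β hP hv hm1 hm2 hm3
  obtain ⟨y', w, σ, h', γ, rfl, hσ, hw⟩ :=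
    walk_cross (fun z => R.S z ⊆ X ∧ ∀ t ∈ R.S z, t ∉ R.S v) β ⟨hy, hyv⟩ β.end_mem_support
      (by
        rintro ⟨h1, _⟩
        obtain ⟨t, ht, htX⟩ := hb
        exact htX (h1 ht))
  refine ⟨u, y, y', w, α, h, σ, h', γ, rfl, hxu, hu, hσ, ?_⟩
  by_contra hne
  have hwv : ∀ t ∈ R.S w, t ∉ R.S v := fun t h1 h2 => hne ⟨t, h1, h2⟩
  apply hw
  refine ⟨?_, hwv⟩
  intro t ht
  by_contra htX
  obtain ⟨s', hs1, hs2⟩ := R.meet_of h'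
  have := hg _ (R.wconn w) ⟨s', hs2, (hσ y' σ.end_mem_support).1 hs1⟩ ⟨t, ht, htX⟩
  exact hwv x this hxv

/-- The exchange argument. -/
theorem seg_exchange (R : TreeRep G T) {X : Set W} {x : W} {v : V} (hxv : x ∈ R.S v)
    {a b a₂ b₂ : V} {P : G.Walk a b} {P₂ : G.Walk a₂ b₂} (hP : P.IsPath)
    (hP₂ : IsLongestPath G P₂) (hv : v ∉ P.support) (hv₂ : v ∉ P₂.support)
    {u y y' w : V} {α : G.Walk a u} {h : G.Adj u y} {σ : G.Walk y y'}
    {h' : G.Adj y' w} {β : G.Walk w b} (hS : SegAt R X x v P α h σ h' β)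
    {u₂ y₂ y₂' w₂ : V} {α₂ : G.Walk a₂ u₂} {h₂ : G.Adj u₂ y₂} {σ₂ : G.Walk y₂ y₂'}
    {h₂' : G.Adj y₂' w₂} {β₂ : G.Walk w₂ b₂} (hS₂ : SegAt R X x v P₂ α₂ h₂ σ₂ h₂' β₂)
    (hle : σ₂.length ≤ σ.length) (hu : u ∉ P₂.support) (hw : w ∉ P₂.support) :
    ∃ z ∈ σ.support, z ∈ P₂.support := by
  by_contra hcon
  push Not at hcon
  have hs := hS.support
  have hs₂ := hS₂.support
  have hl₂ := hS₂.length
  have hnd := hP.support_nodup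
  have hnd₂ := hP₂.1.support_nodup
  have hu1 : u ∈ α.support := α.end_mem_support
  have hu2 : u₂ ∈ α₂.support := α₂.end_mem_support
  have hw1 : w ∈ β.support := β.start_mem_support
  have hw2 : w₂ ∈ β₂.support := β₂.start_mem_support
  rw [hs] at hnd hv
  rw [hs₂] at hnd₂ hv₂ hu hw hcon
  simp only [List.mem_append, not_or] at hv hv₂ hu hw hcon
  have e1 : G.Adj u₂ u := R.adj_of (by rintro rfl; exact hu.1 hu2) hS₂.2.1 hS.2.1
  have e2 : G.Adj w v := by
    obtain ⟨t, h1, h2⟩ := hS.2.2.2.2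
    exact R.adj_of (by rintro rfl; exact hv.2.2 hw1) h1 h2
  have e3 : G.Adj v w₂ := by
    obtain ⟨t, h1, h2⟩ := hS₂.2.2.2.2
    exact R.adj_of (by rintro rfl; exact hv₂.2.2 hw2) h2 h1
  have := hP₂.2 a₂ b₂ (α₂.append (SimpleGraph.Walk.cons e1 (SimpleGraph.Walk.cons h
    (σ.append (SimpleGraph.Walk.cons h' (SimpleGraph.Walk.cons e2
      (SimpleGraph.Walk.cons e3 β₂))))))) (by
    rw [SimpleGraph.Walk.isPath_def]
    have e : (α₂.append (SimpleGraph.Walk.cons e1 (SimpleGraph.Walk.cons h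
        (σ.append (SimpleGraph.Walk.cons h' (SimpleGraph.Walk.cons e2
          (SimpleGraph.Walk.cons e3 β₂))))))).support
        = α₂.support ++ (u :: (σ.support ++ (w :: v :: β₂.support))) := by
      simp [SimpleGraph.Walk.support_append]
    rw [e]
    simp only [List.nodup_append, List.nodup_cons, List.mem_append, List.mem_cons] at hnd hnd₂ ⊢
    grind)
  simp only [SimpleGraph.Walk.length_append, SimpleGraph.Walk.length_cons] at this
  omega

end Rep

theorem gated_comp {W : Type} {T : SimpleGraph W} (hT : T.IsTree) {X : Set W} {x z : W}
    (hg : Gated T X x) (p : T.Walk x z) (hpX : ∀ w ∈ p.support, w ∈ X) {X' : Set W} {x' : W}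
    (hX' : IsCompOf T (X \ {w | w ∈ p.support}) X') (hx' : x' ∈ X')
    (hadj : ∃ u ∈ p.support, T.Adj u x') : Gated T X' x' := by
  obtain ⟨hne, hsub, hcon, hcl⟩ := hX'
  obtain ⟨u, hu, hux⟩ := hadj
  rintro C hC ⟨s, hsC, hsX⟩ ⟨t, htC, htX⟩
  obtain ⟨q, hq⟩ := hC s hsC t htC
  obtain ⟨c, d, α, h, β, rfl, hα, hd⟩ :=
    walk_cross (fun w => w ∈ X') q hsX q.end_mem_support htX
  have hcX := hα c α.end_mem_support
  have hcC : c ∈ C := hq c (by simp [SimpleGraph.Walk.mem_support_append_iff])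
  have hQ : WConn T {w | w ∈ p.support} :=
    WConn.of_induce p.connected_induce_support
  have hdQ : d ∈ p.support := by
    by_contra hdQ
    by_cases hdX : d ∈ X
    · exact hd (hcl hcX ⟨hdX, hdQ⟩ h)
    · have hcd : WConn T {w | w ∈ (SimpleGraph.Walk.cons h SimpleGraph.Walk.nil).support} :=
        WConn.of_induce (SimpleGraph.Walk.connected_induce_support _)
      have := hg _ hcd ⟨c, by simp, (hsub hcX).1⟩ ⟨d, by simp, hdX⟩
      simp only [SimpleGraph.Walk.support_cons, SimpleGraph.Walk.support_nil, List.mem_cons,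
        List.not_mem_nil, or_false, Set.mem_ofPred_eq] at this
      rcases this with rfl | rfl
      · exact (hsub hcX).2 p.start_mem_support
      · exact hdX (hpX _ p.start_mem_support)
  have : c = x' := tree_edge_unique hT (WConn.of_induce hcon) hQ
    (fun w h1 h2 => (hsub h1).2 h2) hcX hx' hdQ hu h hux.symm
  rw [← this]
  exact hcC

theorem exists_comp {W : Type} {T : SimpleGraph W} {X : Set W} {x z : W}
    (hX : WConn T X) (p : T.Walk x z) (hpX : ∀ w ∈ p.support, w ∈ X) {Y : Set W}
    (hY : WConn T Y) (hYne : Y.Nonempty) (hYX : Y ⊆ X \ {w | w ∈ p.support}) :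
    ∃ (X' : Set W) (x' : W), IsCompOf T (X \ {w | w ∈ p.support}) X' ∧ x' ∈ X' ∧
      (∃ u ∈ p.support, T.Adj u x') ∧ Y ⊆ X' := by
  obtain ⟨t, ht⟩ := hYne
  set X' : Set W := {w | ∃ q : T.Walk t w, ∀ s ∈ q.support, s ∈ X \ {w | w ∈ p.support}}
    with hX'
  obtain ⟨q, hq⟩ := hX t (hYX ht).1 x (hpX x p.start_mem_support)
  obtain ⟨c, d, α, h, β, rfl, hα, hd⟩ :=
    walk_cross (fun w => w ∉ p.support) q (hYX ht).2 q.end_mem_support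
      (fun h => h p.start_mem_support)
  rw [not_not] at hd
  have htX' : t ∈ X' := by
    refine ⟨SimpleGraph.Walk.nil, ?_⟩
    intro s hs
    simp only [SimpleGraph.Walk.support_nil, List.mem_singleton] at hs
    subst hs
    exact hYX ht
  refine ⟨X', c, ⟨⟨t, htX'⟩, ?_, ?_, ?_⟩, ?_, ⟨d, hd, h.symm⟩, ?_⟩
  · rintro w ⟨q, hq⟩
    exact hq w q.end_mem_support
  · apply SimpleGraph.induce_connected_of_patches t htX'
    rintro w ⟨q, hq⟩
    classical
    refine ⟨{w | w ∈ q.support}, ?_, q.start_mem_support, q.end_mem_support,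
      q.connected_induce_support.preconnected _ _⟩
    intro s hs
    exact ⟨q.takeUntil s hs, fun r hr => hq r (q.support_takeUntil_subset_support hs hr)⟩
  · rintro a b ⟨q, hq⟩ hb hab
    refine ⟨q.concat hab, ?_⟩
    intro s hs
    rw [SimpleGraph.Walk.support_concat, List.mem_append, List.mem_singleton] at hs
    rcases hs with hs | rfl
    · exact hq s hs
    · exact hb
  · exact ⟨α, fun s hs => ⟨hq s (by
      rw [SimpleGraph.Walk.mem_support_append_iff]; exact Or.inl hs), hα s hs⟩⟩
  · intro w hw
    obtain ⟨q, hq⟩ := hY t ht w hw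
    exact ⟨q, fun s hs => hYX (hq s hs)⟩

theorem main_induction {V W : Type} [Fintype V] [Fintype W] (G : SimpleGraph V)
    (T : SimpleGraph W) (R : TreeRep G T)
    {ι : Type} (a b : ι → V) (P : ∀ i : ι, G.Walk (a i) (b i))
    (hP : ∀ i : ι, IsLongestPath G (P i)) (n : ℕ) :
    ∀ (X : Set W) (x : W), WConn T X → Gated T X x → cutterWins T n X x → ∀ I : Set ι,
    (∀ i ∈ I, (R.core (P i).toSubgraph ∩ X).Nonempty) →
    (∀ i ∈ I, (∃ t ∈ R.S (a i), t ∉ X) ∧ (∃ t ∈ R.S (b i), t ∉ X)) →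
    ∃ A : Finset V, A.card ≤ 3 * n ∧ ∀ i ∈ I, ∃ v ∈ A, v ∈ (P i).support := by
  classical
  induction n with
  | zero => intro X x _ _ h; exact h.elim
  | succ n ih =>
    intro X x hX hg hwin I hcap hends
    obtain ⟨z, hz, p, hp, hpX, hcut⟩ := hwin
    by_cases hI : I.Nonempty
    swap
    · exact ⟨∅, by simp, fun i hi => (hI ⟨i, hi⟩).elim⟩
    obtain ⟨i₀, hi₀⟩ := hI
    obtain ⟨v, ⟨hxv, hvX⟩, hvmax⟩ := Set.exists_max_image
      {v : V | x ∈ R.S v ∧ ∃ t ∈ R.S v, t ∉ X}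
      (fun v => (R.S v ∩ {w | w ∈ p.support}).ncard) (Set.toFinite _)
      (exists_cross R hg (P i₀) (hends i₀ hi₀).1 (hcap i₀ hi₀))
    have hdeep : ∀ u, x ∈ R.S u → (∃ t ∈ R.S u, t ∉ X) → ∀ q ∈ p.support, q ∈ R.S u →
        q ∈ R.S v := by
      intro u hxu huX q hq hqu
      by_contra hqv
      have hsub : R.S v ∩ {w | w ∈ p.support} ⊂ R.S u ∩ {w | w ∈ p.support} := by
        refine ⟨?_, fun h => hqv (h ⟨hqu, hq⟩).1⟩
        rintro q' ⟨h1, h2⟩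
        refine ⟨?_, h2⟩
        exact (path_compare R.isTree p hp (R.wconn u) (R.wconn v) hxu hxv hq h2 hqu
          h1).resolve_right hqv
      have h1 := Set.ncard_lt_ncard hsub (Set.toFinite _)
      have h2 := hvmax u ⟨hxu, huX⟩
      omega
    by_cases hJ : ∃ i ∈ I, v ∉ (P i).support
    swap
    · push Not at hJ
      exact ⟨{v}, by rw [Finset.card_singleton]; omega, fun i hi => ⟨v, by simp, hJ i hi⟩⟩
    -- lengths of segments
    set N : Set ℕ := {m | ∃ i ∈ I, v ∉ (P i).support ∧
      ∃ (u y y' w : V) (α : G.Walk (a i) u) (h : G.Adj u y) (σ : G.Walk y y')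
        (h' : G.Adj y' w) (β : G.Walk w (b i)),
        SegAt R X x v (P i) α h σ h' β ∧ σ.length = m} with hN
    have hNne : N.Nonempty := by
      obtain ⟨i, hi, hiv⟩ := hJ
      obtain ⟨u, y, y', w, α, h, σ, h', β, hS⟩ := exists_seg R hg hxv (P i) (hP i) hiv
        (hends i hi).1 (hends i hi).2 (hcap i hi)
      exact ⟨σ.length, i, hi, hiv, u, y, y', w, α, h, σ, h', β, hS, rfl⟩
    have hNb : BddAbove N := by
      refine ⟨(P i₀).length, ?_⟩
      rintro m ⟨i, hi, hiv, u, y, y', w, α, h, σ, h', β, hS, rfl⟩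
      have h1 := hS.length
      have h2 := (hP i₀).2 _ _ (P i) (hP i).1
      omega
    obtain ⟨i₁, hi₁, hiv₁, u, y, y', w, α, h, σ, h', β, hS, hlen⟩ := Nat.sSup_mem hNne hNb
    have hY : WConn T {t | ∃ c ∈ σ.support, t ∈ R.S c} := R.wconn_walk σ
    have hYne : {t | ∃ c ∈ σ.support, t ∈ R.S c}.Nonempty := by
      obtain ⟨t, ht⟩ := R.S_nonempty y
      exact ⟨t, y, σ.start_mem_support, ht⟩
    have hYX : {t | ∃ c ∈ σ.support, t ∈ R.S c} ⊆ X \ {w | w ∈ p.support} := by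
      rintro t ⟨c, hc, htc⟩
      refine ⟨(hS.2.2.2.1 c hc).1 htc, ?_⟩
      intro htp
      have htp' : t ∈ p.support := htp
      obtain ⟨s, hsu, hsy⟩ := R.meet_of h
      have hQ : WConn T {w | w ∈ p.support} :=
        WConn.of_induce p.connected_induce_support
      obtain ⟨m, hm1, ⟨c', hc', hm2⟩, hm3⟩ := tree_helly R.isTree (R.wconn u) hY hQ
        ⟨s, hsu, y, σ.start_mem_support, hsy⟩ ⟨t, ⟨c, hc, htc⟩, htp⟩
        ⟨x, hS.2.1, p.start_mem_support⟩
      exact (hS.2.2.2.1 c' hc').2 m hm2 (hdeep u hS.2.1 hS.2.2.1 m hm3 hm1)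
    rcases hcut with hcut | hcut
    · obtain ⟨t, ht⟩ := hYne
      have h1 := hYX ht
      rw [← hcut] at h1
      exact (h1.2 h1.1).elim
    obtain ⟨X', x', hcomp, hx', hadj, hYX'⟩ := exists_comp hX p hpX hY hYne hYX
    have hX'X : X' ⊆ X := fun s hs => (hcomp.2.1 hs).1
    obtain ⟨A, hA, hAhit⟩ := ih X' x' (WConn.of_induce hcomp.2.2.1)
      (gated_comp R.isTree hg p hpX hcomp hx' hadj) (hcut X' x' hcomp hx' hadj)
      {i | i ∈ I ∧ v ∉ (P i).support ∧ u ∉ (P i).support ∧ w ∉ (P i).support}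
      (by
        rintro i ⟨hi, hvi, hui, hwi⟩
        obtain ⟨u₂, y₂, y₂', w₂, α₂, h₂, σ₂, h₂', β₂, hS₂⟩ := exists_seg R hg hxv (P i) (hP i)
          hvi (hends i hi).1 (hends i hi).2 (hcap i hi)
        have hle : σ₂.length ≤ σ.length := by
          rw [hlen]
          exact le_csSup hNb ⟨i, hi, hvi, u₂, y₂, y₂', w₂, α₂, h₂, σ₂, h₂', β₂, hS₂, rfl⟩
        obtain ⟨c, hcσ, hcP⟩ := seg_exchange R hxv (hP i₁).1 (hP i) hiv₁ hvi hS hS₂ hle hui hwi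
        have hca : a i ≠ c := by
          rintro rfl
          obtain ⟨t, ht, htX⟩ := (hends i hi).1
          exact htX ((hS.2.2.2.1 _ hcσ).1 ht)
        obtain ⟨d, c', γ, e, δ, heq, _, hc'⟩ :=
          walk_cross (fun s => s ≠ c) (P i) hca hcP (fun h => h rfl)
        rw [not_not] at hc'
        subst hc'
        obtain ⟨t, htd, htc⟩ := R.meet_of e
        refine ⟨t, ⟨d, c', ?_, htd, htc⟩, hYX' ⟨c', hcσ, htc⟩⟩
        rw [SimpleGraph.Walk.adj_toSubgraph_iff_mem_edges, heq]
        simp)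
      (by
        rintro i ⟨hi, -⟩
        obtain ⟨⟨s, hs, hs'⟩, ⟨t, ht, ht'⟩⟩ := hends i hi
        exact ⟨⟨s, hs, fun h => hs' (hX'X h)⟩, ⟨t, ht, fun h => ht' (hX'X h)⟩⟩)
    refine ⟨{v, u, w} ∪ A, ?_, ?_⟩
    · have h1 := Finset.card_union_le {v, u, w} A
      have h2 : ({v, u, w} : Finset V).card ≤ 3 := Finset.card_le_three
      omega
    · intro i hi
      by_cases h1 : v ∈ (P i).support
      · exact ⟨v, by simp, h1⟩
      by_cases h2 : u ∈ (P i).support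
      · exact ⟨u, by simp, h2⟩
      by_cases h3 : w ∈ (P i).support
      · exact ⟨w, by simp, h3⟩
      obtain ⟨s, hs, hs'⟩ := hAhit i ⟨hi, h1, h2, h3⟩
      exact ⟨s, by simp [hs], hs'⟩

theorem cutter_can_win {W : Type} [Fintype W] (T : SimpleGraph W) (n : ℕ) :
    ∀ (X : Set W) (x : W), x ∈ X → X.ncard ≤ n → cutterWins T n X x := by
  induction n with
  | zero =>
    intro X x hx h
    have := (Set.ncard_pos (Set.toFinite X)).2 ⟨x, hx⟩
    omega
  | succ n ih =>
    intro X x hx h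
    refine ⟨x, hx, SimpleGraph.Walk.nil, by simp, by simpa using hx, Or.inr ?_⟩
    intro X' x' hc hx' _
    apply ih X' x' hx'
    have hss : X' ⊂ X := by
      refine ⟨fun s hs => (hc.2.1 hs).1, fun hh => ?_⟩
      exact (hc.2.1 (hh hx)).2 (by simp)
    have := Set.ncard_lt_ncard hss (Set.toFinite _)
    omega

theorem rooted_gated {W : Type} (T : SimpleGraph W) (r x : W) :
    Gated T (rootedSubtree T r x) x := by
  classical
  rintro C hC ⟨s, hsC, hsX⟩ ⟨t, htC, htX⟩
  by_contra hx
  simp only [rootedSubtree, Set.mem_ofPred_eq, not_forall] at htX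
  obtain ⟨p, hp, hxp⟩ := htX
  obtain ⟨q, hq⟩ := hC t htC s hsC
  have h1 := hsX (p.append q).bypass (p.append q).bypass_isPath
  have h2 := (p.append q).support_bypass_subset_support h1
  rw [SimpleGraph.Walk.mem_support_append_iff] at h2
  rcases h2 with h2 | h2
  · exact hxp h2
  · exact hx (hq x h2)

theorem rooted_wconn {W : Type} (T : SimpleGraph W) (hT : T.IsTree) (r x : W) :
    WConn T (rootedSubtree T r x) := by
  classical
  have key : ∀ w ∈ rootedSubtree T r x,
      ∃ q : T.Walk x w, ∀ s ∈ q.support, s ∈ rootedSubtree T r x := by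
    intro w hw
    obtain ⟨p₀⟩ := hT.connected.preconnected r w
    have hp := p₀.bypass_isPath
    set p := p₀.bypass
    have hx := hw p hp
    refine ⟨p.dropUntil x hx, ?_⟩
    intro s hs q hq
    have h1 : p = ((p.takeUntil x hx).append ((p.dropUntil x hx).takeUntil s hs)).append
        ((p.dropUntil x hx).dropUntil s hs) := by
      rw [← SimpleGraph.Walk.append_assoc, SimpleGraph.Walk.take_spec,
        SimpleGraph.Walk.take_spec]
    have h2 : ((p.takeUntil x hx).append ((p.dropUntil x hx).takeUntil s hs)).IsPath := by
      rw [h1] at hp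
      exact hp.of_append_left
    have h3 : q = (p.takeUntil x hx).append ((p.dropUntil x hx).takeUntil s hs) :=
      congrArg Subtype.val ((hT.isAcyclic.subsingleton_path _ _).elim ⟨q, hq⟩ ⟨_, h2⟩)
    rw [h3, SimpleGraph.Walk.mem_support_append_iff]
    exact Or.inl (SimpleGraph.Walk.end_mem_support _)
  intro s hs t ht
  obtain ⟨p, hp⟩ := key s hs
  obtain ⟨q, hq⟩ := key t ht
  refine ⟨p.reverse.append q, fun w hw => ?_⟩
  rw [SimpleGraph.Walk.mem_support_append_iff, SimpleGraph.Walk.support_reverse,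
    List.mem_reverse] at hw
  exact hw.elim (hp w) (hq w)

/-- For a connected chordal `G` with minimal rooted tree representation,
a rooted subtree `X` with root `x`, and a family `𝒫 = P` of longest paths with the core
capture property for `X` whose endpoints' subtrees all leave `X`, there is a set
`A ⊆ V(G)` intersecting every path of the family with `|A| ≤ 4 · ccg(X, x)`. -/
theorem roundpath_transversal {V W : Type} [Fintype V] [Fintype W] (G : SimpleGraph V)
    (T : SimpleGraph W) (hconn : G.Connected) (hchordal : IsChordal G)
    (R : TreeRep G T) (hmin : R.IsMinimal) (r : W) (x : W)
    {ι : Type} (a b : ι → V) (P : ∀ i : ι, G.Walk (a i) (b i))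
    (hP : ∀ i : ι, IsLongestPath G (P i))
    (hcap : ∀ i : ι, (R.core (P i).toSubgraph ∩ rootedSubtree T r x).Nonempty)
    (hends : ∀ i : ι, (∃ t ∈ R.S (a i), t ∉ rootedSubtree T r x) ∧
      (∃ t ∈ R.S (b i), t ∉ rootedSubtree T r x)) :
    ∃ A : Set V, A.Finite ∧ A.ncard ≤ 4 * ccgOn T (rootedSubtree T r x) x ∧
      ∀ i : ι, ∃ v ∈ A, v ∈ (P i).support := by
  have hx : x ∈ rootedSubtree T r x := fun p _ => p.end_mem_support
  have hne : {t : ℕ | cutterWins T t (rootedSubtree T r x) x}.Nonempty :=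
    ⟨_, cutter_can_win T _ _ x hx le_rfl⟩
  obtain ⟨A, hA, hhit⟩ := main_induction G T R a b P hP (ccgOn T (rootedSubtree T r x) x)
    (rootedSubtree T r x) x (rooted_wconn T R.isTree r x) (rooted_gated T r x)
    (Nat.sInf_mem hne) Set.univ (fun i _ => hcap i) (fun i _ => hends i)
  refine ⟨(A : Set V), A.finite_toSet, ?_, ?_⟩
  · rw [Set.ncard_coe_finset]
    omega
  · intro i
    obtain ⟨v, hv, hv'⟩ := hhit i (Set.mem_univ i)
    exact ⟨v, by simpa using hv, hv'⟩
end
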